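/- Let Θ be a finite multiset of real numbers such that no element of Θ is an integer multiple of π/2. Then the following are equivalent: (1) the multiset {cot θ : θ ∈ Θ} (with multiplicities) is negation-invariant; (2) for every nonzero real number r, the number of elements θ of Θ (counted with multiplicity) for which there exists an integer m with (θ + mπ)⁻¹ = r equals the number of elements θ of Θ (counted with multiplicity) for which there exists an integer m with (θ + mπ)⁻¹ = −r. -/

import Mathlib

open Real
open scoped Classical

/-!
On the reals with nonzero sine, `cot` is a complete invariant of the class modulo `π`. Hence, when
`sin r⁻¹ ≠ 0`, the `θ` with a translate inverse to `r` are exactly those with `cot θ = cot r⁻¹`,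
and replacing `r` by `-r` replaces this cotangent by its negative. If `sin r⁻¹ = 0`, both counts
vanish. Since `cot` maps `(0, π)` onto `ℝ`, every multiplicity of the cotangent multiset is one of
these counts.
-/

section NegationInvariance

variable {α : Type*} [InvolutiveNeg α] [DecidableEq α]

theorem count_map_neg (S : Multiset α) (a : α) : (S.map (fun b => -b)).count a = S.count (-a) := by
  simpa only [neg_neg] using Multiset.count_map_eq_count' (fun b : α => -b) S neg_injective (-a)

theorem map_neg_eq_self_iff_count_eq_count_neg (S : Multiset α) :
    S.map (fun a => -a) = S ↔ ∀ a, S.count a = S.count (-a) := by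
  simp only [Multiset.ext, count_map_neg, eq_comm]

end NegationInvariance

theorem cot_neg (x : ℝ) : Real.cot (-x) = -Real.cot x := by
  rw [Real.cot_eq_cos_div_sin, Real.cot_eq_cos_div_sin, cos_neg, sin_neg, div_neg]

theorem exists_mem_Ioo_cot_eq (c : ℝ) : ∃ x ∈ Set.Ioo 0 π, Real.cot x = c := by
  refine ⟨π / 2 - arctan c, ⟨?_, ?_⟩, ?_⟩
  · linarith [arctan_lt_pi_div_two c]
  · linarith [neg_pi_div_two_lt_arctan c]
  · rw [← inv_inj, Real.cot_inv_eq_tan, tan_pi_div_two_sub, tan_arctan]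

theorem cot_sub_cot {x y : ℝ} (hx : sin x ≠ 0) (hy : sin y ≠ 0) :
    Real.cot x - Real.cot y = sin (y - x) / (sin x * sin y) := by
  rw [Real.cot_eq_cos_div_sin, Real.cot_eq_cos_div_sin, div_sub_div _ _ hx hy, sin_sub]
  ring

theorem cot_eq_cot_iff_exists_int_add_mul_pi {x y : ℝ} (hx : sin x ≠ 0) (hy : sin y ≠ 0) :
    Real.cot x = Real.cot y ↔ ∃ m : ℤ, x + m * π = y := by
  rw [← sub_eq_zero, cot_sub_cot hx hy, div_eq_zero_iff, or_iff_left (mul_ne_zero hx hy),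
    sin_eq_zero_iff]
  simp only [eq_sub_iff_add_eq']

theorem sin_add_int_mul_pi_ne_zero {x : ℝ} (hx : sin x ≠ 0) (m : ℤ) : sin (x + m * π) ≠ 0 := by
  rw [sin_add_int_mul_pi]
  exact mul_ne_zero (zpow_ne_zero m (by norm_num)) hx

section CountInverseTranslates

variable {Θ : Multiset ℝ} {r : ℝ}

theorem countP_inv_add_int_mul_pi_eq_zero (hΘ : ∀ θ ∈ Θ, sin θ ≠ 0) (hr : sin r⁻¹ = 0) :
    Θ.countP (fun θ => ∃ m : ℤ, (θ + m * π)⁻¹ = r) = 0 := by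
  rw [Multiset.countP_eq_zero]
  rintro θ hθ ⟨m, rfl⟩
  rw [inv_inv] at hr
  exact sin_add_int_mul_pi_ne_zero (hΘ θ hθ) m hr

theorem countP_inv_add_int_mul_pi_eq_count_cot (hΘ : ∀ θ ∈ Θ, sin θ ≠ 0) (hr : sin r⁻¹ ≠ 0) :
    Θ.countP (fun θ => ∃ m : ℤ, (θ + m * π)⁻¹ = r) = (Θ.map Real.cot).count (Real.cot r⁻¹) := by
  rw [Multiset.count_map, ← Multiset.countP_eq_card_filter]
  refine Multiset.countP_congr rfl fun θ hθ => propext ?_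
  simp only [inv_eq_iff_eq_inv]
  rw [← cot_eq_cot_iff_exists_int_add_mul_pi (hΘ θ hθ) hr, eq_comm]

end CountInverseTranslates

theorem cot_multiset_neg_invariant_iff_count_general
    (Θ : Multiset ℝ) (hΘ : ∀ θ ∈ Θ, ∀ k : ℤ, θ ≠ k * π) :
    ((Θ.map Real.cot).map (fun r => -r) = Θ.map Real.cot) ↔
      ∀ r : ℝ, r ≠ 0 →
        Θ.countP (fun θ => ∃ m : ℤ, (θ + m * π)⁻¹ = r) =
          Θ.countP (fun θ => ∃ m : ℤ, (θ + m * π)⁻¹ = -r) := by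
  have hsin : ∀ θ ∈ Θ, sin θ ≠ 0 := fun θ hθ => sin_ne_zero_iff.2 fun k => (hΘ θ hθ k).symm
  have count_neg {r : ℝ} (hr : sin r⁻¹ ≠ 0) :
      Θ.countP (fun θ => ∃ m : ℤ, (θ + m * π)⁻¹ = -r) =
        (Θ.map Real.cot).count (-Real.cot r⁻¹) := by
    rw [countP_inv_add_int_mul_pi_eq_count_cot hsin (by simpa [inv_neg] using hr), inv_neg, cot_neg]
  rw [map_neg_eq_self_iff_count_eq_count_neg]
  constructor
  · intro h r _
    by_cases hr : sin r⁻¹ = 0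
    · rw [countP_inv_add_int_mul_pi_eq_zero hsin hr,
        countP_inv_add_int_mul_pi_eq_zero hsin (by simpa [inv_neg] using hr)]
    · rw [countP_inv_add_int_mul_pi_eq_count_cot hsin hr, count_neg hr, h]
  · intro h c
    obtain ⟨x, hx, rfl⟩ := exists_mem_Ioo_cot_eq c
    have hsin_x : sin x⁻¹⁻¹ ≠ 0 := by simpa only [inv_inv] using (sin_pos_of_mem_Ioo hx).ne'
    simpa only [countP_inv_add_int_mul_pi_eq_count_cot hsin hsin_x, count_neg hsin_x, inv_inv]
      using h x⁻¹ (inv_ne_zero hx.1.ne')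

/-- For a finite multiset `Θ` of real numbers none of which is an integer multiple of
`π/2`, the multiset `{cot θ : θ ∈ Θ}` is negation-invariant if and only if for every
nonzero real `r` the number of `θ ∈ Θ` (with multiplicity) such that `(θ+mπ)⁻¹ = r` for
some integer `m` equals the number of `θ ∈ Θ` such that `(θ+mπ)⁻¹ = -r` for some `m`. -/
theorem cot_multiset_neg_invariant_iff_count
    (Θ : Multiset ℝ) (hΘ : ∀ θ ∈ Θ, ∀ k : ℤ, θ ≠ k * (π / 2)) :
    ((Θ.map Real.cot).map (fun r => -r) = Θ.map Real.cot) ↔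
      ∀ r : ℝ, r ≠ 0 →
        Θ.countP (fun θ => ∃ m : ℤ, (θ + m * π)⁻¹ = r) =
          Θ.countP (fun θ => ∃ m : ℤ, (θ + m * π)⁻¹ = -r) := by
  exact cot_multiset_neg_invariant_iff_count_general Θ fun θ hθ k hk =>
    hΘ θ hθ (2 * k) (by rw [hk]; push_cast; ring)
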